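/- Fix ω0 ∈ ℝ, σ0² > 0, σq² > 0, and a finite radius r > 0. Define D_{r,q}(ω) := ∫_{ω0−r}^{ω0+r} φ(t; ω, σq²) dt and the type-q censored posterior mean a_q*(s,r) := (∫ ω·φ(s; ω, σq²)·φ(ω; ω0, σ0²)/D_{r,q}(ω) dω) / (∫ φ(s; ω, σq²)·φ(ω; ω0, σ0²)/D_{r,q}(ω) dω). Then s ↦ a_q*(s,r) is strictly increasing: for all s < s′, a_q*(s,r) < a_q*(s′,r). -/

import Mathlib

open MeasureTheory Real Filter

/-- The Gaussian density with mean `m` and variance `v`. -/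
noncomputable def gauss (x m v : ℝ) : ℝ :=
  (Real.sqrt (2 * Real.pi * v))⁻¹ * Real.exp (-(x - m) ^ 2 / (2 * v))

/-- `D_{r,q}(ω)`: the probability of the window `[ω0−r, ω0+r]` under a type-`q` signal. -/
noncomputable def winProbQ (ω0 vq r ω : ℝ) : ℝ :=
  ∫ t in Set.Icc (ω0 - r) (ω0 + r), gauss t ω vq

/-- `a_q*(s,r)`: the censored posterior-mean action when the source quality is known. -/
noncomputable def aQ (ω0 v0 vq r s : ℝ) : ℝ :=
  (∫ ω : ℝ, ω * (gauss s ω vq * gauss ω ω0 v0 / winProbQ ω0 vq r ω)) /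
    (∫ ω : ℝ, gauss s ω vq * gauss ω ω0 v0 / winProbQ ω0 vq r ω)

lemma gauss_pos (x m v : ℝ) (hv : 0 < v) : 0 < gauss x m v := by
  unfold gauss
  have := Real.pi_pos
  positivity

lemma gauss_cont2 (v : ℝ) : Continuous (fun p : ℝ × ℝ => gauss p.2 p.1 v) := by
  unfold gauss
  fun_prop

lemma winProbQ_lower (ω0 vq r ω : ℝ) (hvq : 0 < vq) (hr : 0 < r) :
    2 * r * ((Real.sqrt (2 * Real.pi * vq))⁻¹ *
      Real.exp (-(|ω - ω0| + r) ^ 2 / (2 * vq))) ≤ winProbQ ω0 vq r ω := by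
  unfold winProbQ
  have hc : Continuous (fun t => gauss t ω vq) := by unfold gauss; fun_prop
  have h1 : ∫ t in Set.Icc (ω0 - r) (ω0 + r), ((Real.sqrt (2 * Real.pi * vq))⁻¹ *
      Real.exp (-(|ω - ω0| + r) ^ 2 / (2 * vq))) ≤
      ∫ t in Set.Icc (ω0 - r) (ω0 + r), gauss t ω vq := by
    apply setIntegral_mono_on
    · exact continuous_const.integrableOn_Icc
    · exact hc.integrableOn_Icc
    · exact measurableSet_Icc
    · intro t ht
      unfold gauss
      have h2 : (t - ω) ^ 2 ≤ (|ω - ω0| + r) ^ 2 := by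
        apply sq_le_sq'
        · have := le_abs_self (ω - ω0)
          linarith [ht.1]
        · have := neg_abs_le (ω - ω0)
          linarith [ht.2]
      gcongr
  rw [setIntegral_const] at h1
  simp only [smul_eq_mul, Measure.real, Real.volume_Icc] at h1
  rw [ENNReal.toReal_ofReal (by linarith)] at h1
  convert h1 using 2
  ring

lemma winProbQ_pos (ω0 vq r ω : ℝ) (hvq : 0 < vq) (hr : 0 < r) : 0 < winProbQ ω0 vq r ω := by
  refine lt_of_lt_of_le ?_ (winProbQ_lower ω0 vq r ω hvq hr)
  have := Real.pi_pos
  positivity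

lemma winProbQ_meas (ω0 vq r : ℝ) : Measurable (winProbQ ω0 vq r) := by
  have := (gauss_cont2 vq).stronglyMeasurable.integral_prod_right'
    (ν := volume.restrict (Set.Icc (ω0 - r) (ω0 + r)))
  exact this.measurable

/-- unnormalised posterior density -/
noncomputable def post (ω0 v0 vq r s ω : ℝ) : ℝ :=
  gauss s ω vq * gauss ω ω0 v0 / winProbQ ω0 vq r ω

lemma post_pos (ω0 v0 vq r s ω : ℝ) (hv0 : 0 < v0) (hvq : 0 < vq) (hr : 0 < r) :
    0 < post ω0 v0 vq r s ω :=
  div_pos (mul_pos (gauss_pos _ _ _ hvq) (gauss_pos _ _ _ hv0)) (winProbQ_pos _ _ _ _ hvq hr)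

lemma post_meas (ω0 v0 vq r s : ℝ) : Measurable (post ω0 v0 vq r s) := by
  unfold post
  refine Measurable.div ?_ (winProbQ_meas _ _ _)
  have : Continuous (fun ω => gauss s ω vq * gauss ω ω0 v0) := by unfold gauss; fun_prop
  exact this.measurable

lemma post_bound (ω0 v0 vq r s : ℝ) (hv0 : 0 < v0) (hvq : 0 < vq) (hr : 0 < r) :
    ∃ C : ℝ, ∀ ω, post ω0 v0 vq r s ω ≤ C * Real.exp (-(1 / (4 * v0)) * (ω - ω0) ^ 2) := by
  set d := s - ω0 with hd
  set K := (|d| + r) / vq with hK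
  refine ⟨(Real.sqrt (2 * Real.pi * v0))⁻¹ / (2 * r) *
    Real.exp (r ^ 2 / (2 * vq) + K ^ 2 * v0), fun ω => ?_⟩
  have hpi := Real.pi_pos
  have hq : 0 < (Real.sqrt (2 * Real.pi * vq))⁻¹ := by positivity
  have h0 : 0 < (Real.sqrt (2 * Real.pi * v0))⁻¹ := by positivity
  unfold post
  rw [div_le_iff₀ (winProbQ_pos _ _ _ _ hvq hr)]
  refine le_trans ?_ (mul_le_mul_of_nonneg_left (winProbQ_lower ω0 vq r ω hvq hr) (by positivity))
  unfold gauss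
  set a := (Real.sqrt (2 * Real.pi * vq))⁻¹
  set b := (Real.sqrt (2 * Real.pi * v0))⁻¹
  set u := ω - ω0 with hu
  have key : -(s - ω) ^ 2 / (2 * vq) + -u ^ 2 / (2 * v0) ≤
      (r ^ 2 / (2 * vq) + K ^ 2 * v0) + -(1 / (4 * v0)) * u ^ 2
        + -(|u| + r) ^ 2 / (2 * vq) := by
    have e1 : s - ω = d - u := by rw [hd, hu]; ring
    rw [e1]
    have hdu : d * u ≤ |d| * |u| := by rw [← abs_mul]; exact le_abs_self _
    have hsq : |u| ^ 2 = u ^ 2 := sq_abs u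
    have h1 : -(d - u) ^ 2 / (2 * vq) ≤
        r ^ 2 / (2 * vq) + K * |u| + -(|u| + r) ^ 2 / (2 * vq) := by
      have e2 : r ^ 2 / (2 * vq) + K * |u| + -(|u| + r) ^ 2 / (2 * vq) =
        (r ^ 2 + 2 * (|d| + r) * |u| - (|u| + r) ^ 2) / (2 * vq) := by
        rw [hK]; field_simp; ring
      rw [e2]
      gcongr
      nlinarith [sq_nonneg d]
    have h2 : K * |u| ≤ K ^ 2 * v0 + u ^ 2 / (4 * v0) := by
      rw [← hsq]
      have : K ^ 2 * v0 + |u| ^ 2 / (4 * v0) - K * |u| = (2 * v0 * K - |u|) ^ 2 / (4 * v0) := by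
        field_simp; ring
      have h3 : 0 ≤ (2 * v0 * K - |u|) ^ 2 / (4 * v0) := by positivity
      linarith
    have h4 : -u ^ 2 / (2 * v0) = -(1 / (4 * v0)) * u ^ 2 - u ^ 2 / (4 * v0) := by
      field_simp; ring
    linarith
  have hexp := Real.exp_le_exp.mpr key
  rw [Real.exp_add, Real.exp_add, Real.exp_add (_ + _)] at hexp
  calc _ = a * b * (Real.exp (-(s - ω) ^ 2 / (2 * vq)) * Real.exp (-u ^ 2 / (2 * v0))) := by ring
    _ ≤ a * b * _ := mul_le_mul_of_nonneg_left hexp (by positivity)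
    _ = _ := by field_simp

lemma post_int (ω0 v0 vq r s : ℝ) (hv0 : 0 < v0) (hvq : 0 < vq) (hr : 0 < r) :
    Integrable (post ω0 v0 vq r s) := by
  obtain ⟨C, hC⟩ := post_bound ω0 v0 vq r s hv0 hvq hr
  have hb : 0 < 1 / (4 * v0) := by positivity
  refine Integrable.mono' (((integrable_exp_neg_mul_sq hb).comp_sub_right ω0).const_mul C)
    (post_meas _ _ _ _ _).aestronglyMeasurable (Eventually.of_forall fun ω => ?_)
  rw [Real.norm_of_nonneg (post_pos _ _ _ _ _ _ hv0 hvq hr).le]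
  exact hC ω

lemma post_int_mul (ω0 v0 vq r s : ℝ) (hv0 : 0 < v0) (hvq : 0 < vq) (hr : 0 < r) :
    Integrable (fun ω => ω * post ω0 v0 vq r s ω) := by
  obtain ⟨C, hC⟩ := post_bound ω0 v0 vq r s hv0 hvq hr
  have hb : 0 < 1 / (4 * v0) := by positivity
  have h1 : Integrable (fun ω => (ω - ω0) * post ω0 v0 vq r s ω) := by
    refine Integrable.mono'
      (((integrable_mul_exp_neg_mul_sq hb).comp_sub_right ω0).norm.const_mul C)
      ((measurable_id.sub_const ω0).mul (post_meas _ _ _ _ _)).aestronglyMeasurable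
      (Eventually.of_forall fun ω => ?_)
    rw [norm_mul, Real.norm_of_nonneg (post_pos _ _ _ _ _ _ hv0 hvq hr).le, norm_mul,
      Real.norm_of_nonneg (Real.exp_pos _).le]
    calc _ ≤ ‖ω - ω0‖ * _ := mul_le_mul_of_nonneg_left (hC ω) (norm_nonneg _)
      _ = _ := by ring
  refine (h1.add ((post_int ω0 v0 vq r s hv0 hvq hr).const_mul ω0)).congr
    (Eventually.of_forall fun ω => ?_)
  simp only [Pi.add_apply]
  ring

lemma integral_pos_of_ne (g : ℝ → ℝ) (m : ℝ) (hg : Integrable g) (h0 : ∀ x, 0 ≤ g x)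
    (h : ∀ x, x ≠ m → 0 < g x) : 0 < ∫ x, g x := by
  rw [integral_pos_iff_support_of_nonneg h0 hg]
  refine lt_of_lt_of_le ?_ (measure_mono (s := Set.Ioo m (m + 1)) ?_)
  · simp
  · intro x hx
    exact (h x hx.1.ne').ne'

lemma post_tilt (ω0 v0 vq r s s' ω : ℝ) (hvq : 0 < vq) :
    post ω0 v0 vq r s' ω = Real.exp ((s ^ 2 - s' ^ 2) / (2 * vq)) *
      Real.exp ((s' - s) / vq * ω) * post ω0 v0 vq r s ω := by
  have : gauss s' ω vq = Real.exp ((s ^ 2 - s' ^ 2) / (2 * vq)) *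
      Real.exp ((s' - s) / vq * ω) * gauss s ω vq := by
    unfold gauss
    rw [mul_left_comm, ← Real.exp_add, ← Real.exp_add]
    congr 2
    field_simp
    ring
  unfold post
  rw [this]
  ring

/-- Lemma 3 (`lem:sincreasing`): for a known source quality and a finite censoring radius,
the optimal action is strictly increasing in the signal. -/
theorem stmt_8 (ω0 v0 vq r : ℝ) (hv0 : 0 < v0) (hvq : 0 < vq) (hr : 0 < r) :
    ∀ s s' : ℝ, s < s' → aQ ω0 v0 vq r s < aQ ω0 v0 vq r s' := by
  intro s s' hs
  have hP : ∀ s, 0 < ∫ ω, post ω0 v0 vq r s ω := fun s =>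
    integral_pos_of_ne _ 0 (post_int ω0 v0 vq r s hv0 hvq hr)
      (fun x => (post_pos _ _ _ _ _ _ hv0 hvq hr).le)
      (fun x _ => post_pos _ _ _ _ _ _ hv0 hvq hr)
  have hA : ∀ s, aQ ω0 v0 vq r s =
    (∫ ω, ω * post ω0 v0 vq r s ω) / ∫ ω, post ω0 v0 vq r s ω := fun _ => rfl
  rw [hA s']
  set m := aQ ω0 v0 vq r s with hm
  rw [lt_div_iff₀ (hP s')]
  have hm0 : m * (∫ ω, post ω0 v0 vq r s ω) = ∫ ω, ω * post ω0 v0 vq r s ω := by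
    rw [hm, hA s, div_mul_cancel₀ _ (hP s).ne']
  set c := Real.exp ((s ^ 2 - s' ^ 2) / (2 * vq)) with hc
  have hcpos : 0 < c := Real.exp_pos _
  set δ := (s' - s) / vq with hδ
  have hδpos : 0 < δ := div_pos (by linarith) hvq
  have i1 := post_int ω0 v0 vq r s hv0 hvq hr
  have i2 := post_int_mul ω0 v0 vq r s hv0 hvq hr
  have i1' := post_int ω0 v0 vq r s' hv0 hvq hr
  have i2' := post_int_mul ω0 v0 vq r s' hv0 hvq hr
  have j' := i2'.sub (i1'.const_mul m)
  have j := (i2.sub (i1.const_mul m)).const_mul (c * Real.exp (δ * m))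
  have hpos := integral_pos_of_ne _ m (j'.sub j) ?_ ?_
  · rw [integral_sub' j' j, integral_const_mul] at hpos
    rw [integral_sub' i2' (i1'.const_mul m), integral_sub' i2 (i1.const_mul m),
      integral_const_mul, integral_const_mul] at hpos
    rw [hm0] at hpos
    linarith
  all_goals
    have e : ∀ x, (((fun ω => ω * post ω0 v0 vq r s' ω) - fun ω => m * post ω0 v0 vq r s' ω) -
      fun x => c * Real.exp (δ * m) *
        ((fun ω => ω * post ω0 v0 vq r s ω) - fun ω => m * post ω0 v0 vq r s ω) x) x
      = c * post ω0 v0 vq r s x * ((x - m) * (Real.exp (δ * x) - Real.exp (δ * m))) := by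
      intro x
      simp only [Pi.sub_apply]
      rw [post_tilt ω0 v0 vq r s s' x hvq]
      ring
    have hlt : ∀ x, x ≠ m →
        0 < c * post ω0 v0 vq r s x * ((x - m) * (Real.exp (δ * x) - Real.exp (δ * m))) := by
      intro x hx
      refine mul_pos (mul_pos hcpos (post_pos _ _ _ _ _ _ hv0 hvq hr)) ?_
      rcases lt_or_gt_of_ne hx with h | h
      · apply mul_pos_of_neg_of_neg (by linarith)
        have := Real.exp_lt_exp.mpr (mul_lt_mul_of_pos_left h hδpos)
        linarith
      · apply mul_pos (by linarith)
        have := Real.exp_lt_exp.mpr (mul_lt_mul_of_pos_left h hδpos)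
        linarith
  · intro x
    rw [e x]
    by_cases hx : x = m
    · rw [hx]; simp
    · exact (hlt x hx).le
  · intro x hx
    rw [e x]
    exact hlt x hx
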